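/- Let D be a set of closed normal λ-terms and T, T′ two closed λ-terms. If T is a storage operator for D and T′ ≃β T, then T′ is also a storage operator for D. -/

import Mathlib

/- Pure untyped λ-calculus with de Bruijn indices. -/

inductive Lam : Type
  | var : ℕ → Lam
  | app : Lam → Lam → Lam
  | abs : Lam → Lam
  deriving DecidableEq

namespace Lam

/-- Renaming of free variables. -/
def rename (ρ : ℕ → ℕ) : Lam → Lam
  | var i => var (ρ i)
  | app u v => app (u.rename ρ) (v.rename ρ)
  | abs u => abs (u.rename (fun i => match i with | 0 => 0 | j+1 => ρ j + 1))

/-- Lifting of a simultaneous substitution under a binder. -/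
def liftSub (σ : ℕ → Lam) : ℕ → Lam
  | 0 => var 0
  | i+1 => (σ i).rename (· + 1)

/-- Simultaneous (capture-avoiding) substitution of the free variables. -/
def subst (σ : ℕ → Lam) : Lam → Lam
  | var i => σ i
  | app u v => app (u.subst σ) (v.subst σ)
  | abs u => abs (u.subst (liftSub σ))

/-- `u.subst0 v` is `u[v/x]` for the first variable. -/
def subst0 (u v : Lam) : Lam :=
  u.subst (fun i => match i with | 0 => v | j+1 => var j)

/-- One step of β-reduction (anywhere in the term). -/
inductive Beta : Lam → Lam → Prop
  | beta (u v : Lam) : Beta (app (abs u) v) (u.subst0 v)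
  | appL {u u'} (v) : Beta u u' → Beta (app u v) (app u' v)
  | appR (u) {v v'} : Beta v v' → Beta (app u v) (app u v')
  | abs {u u'} : Beta u u' → Beta (abs u) (abs u')

/-- β-equivalence `≃β`. -/
def BetaEq : Lam → Lam → Prop := Relation.EqvGen Beta

/-- A term is normal if it has no β-redex. -/
def Normal (t : Lam) : Prop := ∀ u, ¬ Beta t u

def IsAbs : Lam → Prop
  | abs _ => True
  | _ => False

/-- One step of head reduction: reduction of the head redex. -/
inductive HeadStep : Lam → Lam → Prop
  | beta (u v) : HeadStep (app (abs u) v) (u.subst0 v)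
  | appL {u u'} (v) : ¬ u.IsAbs → HeadStep u u' → HeadStep (app u v) (app u' v)
  | abs {u u'} : HeadStep u u' → HeadStep (abs u) (abs u')

/-- `HeadRedN n u v` : `u` head-reduces to `v` in exactly `n` steps (`u ≻ v` with `n(u,v) = n`). -/
inductive HeadRedN : ℕ → Lam → Lam → Prop
  | refl (u) : HeadRedN 0 u u
  | step {n u v w} : HeadStep u v → HeadRedN n v w → HeadRedN (n+1) u w

/-- `u ≻ v` : `v` is obtained from `u` by some head reductions. -/
def HeadRed (u v : Lam) : Prop := ∃ n, HeadRedN n u v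

/-- Head normal form. -/
def HeadNF (t : Lam) : Prop := ∀ u, ¬ HeadStep t u

def ClosedUnder : ℕ → Lam → Prop
  | k, var i => i < k
  | k, app u v => ClosedUnder k u ∧ ClosedUnder k v
  | k, abs u => ClosedUnder (k+1) u

/-- Closed λ-term. -/
def Closed (t : Lam) : Prop := ClosedUnder 0 t

/-- `(f)ⁿx` : `iterApp f n x = (f)(f)…(f)x`. -/
def iterApp (f : Lam) : ℕ → Lam → Lam
  | 0, x => x
  | n+1, x => app f (iterApp f n x)

/-- The Church integer `n̲ = λxλf(f)ⁿx`. -/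
def church (n : ℕ) : Lam := abs (abs (iterApp (var 0) n (var 1)))

/-- `(t)w₁…wₖ`. -/
def appList (t : Lam) (ws : List Lam) : Lam := ws.foldl app t

/-- `T` is a storage operator for the closed normal term `t` :
there is `τ ≃β t` such that for every `θ ≃β t` there is a substitution `σ`
(not touching the fresh variable `f`, represented by the de Bruijn index `0`)
with `(T)θf ≻ (f)σ(τ)`. -/
def IsStorageFor (T t : Lam) : Prop :=
  Closed T ∧ ∃ τ, BetaEq τ t ∧ ∀ θ, BetaEq θ t →
    ∃ σ : ℕ → Lam, σ 0 = var 0 ∧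
      HeadRed (app (app T θ) (var 0)) (app (var 0) (τ.subst σ))

end Lam

/-!
Run `(T)xf` with the argument `x` kept as an opaque variable. When `x` comes into head position,
only the outermost constructor of `t` is exposed, and the immediate subterms of `t` are again
replaced by opaque variables. For closed normal `t`, the run does not depend on `θ ≃β t`: by
standardization `θ` unfolds to `t` by weak head reductions, so a run ending in `(f)τ` is mirrored
by `(T)θf ≻ (f)σ(τ)` for every `θ`, where `σ` substitutes the actual terms for the variables.
By confluence, runs of β-equivalent terms end in β-equivalent results.

It remains to see that a storage operator `T` for `t`, with `(T)θf ≻ (f)σ(τ)`, has a run ending in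
some `(f)τ₁` with `τ₁ ≃β t`. Apply it to the `θ` obtained from `t` by putting a tower of identities
`(I)I…I` in front of every subterm, higher than the size of `τ`. Each exposure then costs at least
one reduction step, so the run stops, at a `τ₁` with `σ(τ) = σ₁(τ₁)`. Wherever `σ₁` contributes a
padded subterm, the smaller term `τ` must have a free variable in head position. Hence `τ` and `τ₁`
differ only in subterms with a free head variable, and such subterms are erased on the way from
`τ` to its closed normal form `t`.
-/

namespace Lam

open Relation Function

/-! ### Substitution -/

/-- Lifting of a renaming under a binder. -/
def liftRen (ρ : ℕ → ℕ) : ℕ → ℕ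
  | 0 => 0
  | i + 1 => ρ i + 1

/-- The substitution `v, σ 0, σ 1, …`. -/
def scons (v : Lam) (σ : ℕ → Lam) : ℕ → Lam
  | 0 => v
  | i + 1 => σ i

theorem rename_abs (ρ : ℕ → ℕ) (u : Lam) : (abs u).rename ρ = abs (u.rename (liftRen ρ)) := rfl

theorem subst0_eq_subst_scons (u v : Lam) : u.subst0 v = u.subst (scons v var) := rfl

theorem liftSub_eq_var {σ : ℕ → Lam} {k : ℕ} (hσ : ∀ i < k, σ i = var i) :
    ∀ i < k + 1, liftSub σ i = var i
  | 0, _ => rfl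
  | i + 1, hi => by simp only [liftSub, hσ i (Nat.lt_of_succ_lt_succ hi), rename]

theorem liftSub_var : liftSub var = var :=
  funext fun i => liftSub_eq_var (fun _ _ => rfl) i (Nat.lt_succ_self i)

theorem subst_var (u : Lam) : u.subst var = u := by
  induction u with
  | var i => rfl
  | app u v hu hv => simp only [subst, hu, hv]
  | abs u hu => simp only [subst, liftSub_var, hu]

theorem rename_rename (u : Lam) (ρ ρ' : ℕ → ℕ) : (u.rename ρ).rename ρ' = u.rename (ρ' ∘ ρ) := by
  induction u generalizing ρ ρ' with
  | var i => rfl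
  | app u v hu hv => simp only [rename, hu, hv]
  | abs u hu =>
    have hlift : liftRen ρ' ∘ liftRen ρ = liftRen (ρ' ∘ ρ) := by funext i; cases i <;> rfl
    simp only [rename_abs, hu, hlift]

theorem rename_subst (u : Lam) (ρ : ℕ → ℕ) (σ : ℕ → Lam) :
    (u.rename ρ).subst σ = u.subst (σ ∘ ρ) := by
  induction u generalizing ρ σ with
  | var i => rfl
  | app u v hu hv => simp only [rename, subst, hu, hv]
  | abs u hu =>
    have hlift : liftSub σ ∘ liftRen ρ = liftSub (σ ∘ ρ) := by funext i; cases i <;> rfl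
    simp only [rename_abs, subst, hu, hlift]

theorem subst_rename (u : Lam) (σ : ℕ → Lam) (ρ : ℕ → ℕ) :
    (u.subst σ).rename ρ = u.subst fun i => (σ i).rename ρ := by
  induction u generalizing σ ρ with
  | var i => rfl
  | app u v hu hv => simp only [rename, subst, hu, hv]
  | abs u hu =>
    have hlift : (fun i => (liftSub σ i).rename (liftRen ρ)) =
        liftSub fun i => (σ i).rename ρ := by
      funext i
      cases i with
      | zero => rfl
      | succ i => simp only [liftSub, rename_rename]; rfl
    simp only [subst, rename_abs, hu, hlift]

theorem subst_subst (u : Lam) (σ σ' : ℕ → Lam) :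
    (u.subst σ).subst σ' = u.subst fun i => (σ i).subst σ' := by
  induction u generalizing σ σ' with
  | var i => rfl
  | app u v hu hv => simp only [subst, hu, hv]
  | abs u hu =>
    have hlift : (fun i => (liftSub σ i).subst (liftSub σ')) =
        liftSub fun i => (σ i).subst σ' := by
      funext i
      cases i with
      | zero => rfl
      | succ i => simp only [liftSub, rename_subst, subst_rename]; rfl
    simp only [subst, hu, hlift]

theorem rename_eq_subst (u : Lam) (ρ : ℕ → ℕ) : u.rename ρ = u.subst (var ∘ ρ) := by
  rw [← rename_subst, subst_var]

theorem subst_liftSub_subst0 (u v : Lam) (σ : ℕ → Lam) :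
    (u.subst (liftSub σ)).subst0 v = u.subst (scons v σ) := by
  rw [subst0_eq_subst_scons, subst_subst]
  congr 1
  funext i
  cases i with
  | zero => rfl
  | succ i => exact (rename_subst _ _ _).trans (subst_var _)

theorem subst0_subst (u v : Lam) (σ : ℕ → Lam) :
    (u.subst0 v).subst σ = (u.subst (liftSub σ)).subst0 (v.subst σ) := by
  rw [subst_liftSub_subst0, subst0_eq_subst_scons, subst_subst]
  congr 1
  funext i
  cases i <;> rfl

theorem subst0_rename (u v : Lam) (ρ : ℕ → ℕ) :
    (u.subst0 v).rename ρ = (u.rename (liftRen ρ)).subst0 (v.rename ρ) := by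
  have hlift : liftSub (var ∘ ρ) = var ∘ liftRen ρ := by funext i; cases i <;> rfl
  simp only [rename_eq_subst, subst0_subst, hlift]

theorem forall_scons {P : Lam → Lam → Prop} {u v : Lam} {σ σ' : ℕ → Lam} (h : P u v)
    (hσ : ∀ i, P (σ i) (σ' i)) : ∀ i, P (scons u σ i) (scons v σ' i)
  | 0 => h
  | i + 1 => hσ i

theorem ClosedUnder.mono {u : Lam} {n m : ℕ} (hu : ClosedUnder n u) (h : n ≤ m) :
    ClosedUnder m u := by
  induction u generalizing n m with
  | var i => exact lt_of_lt_of_le hu h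
  | app u v ihu ihv => exact ⟨ihu hu.1 h, ihv hu.2 h⟩
  | abs u ih => exact ih (n := n + 1) (m := m + 1) hu (Nat.succ_le_succ h)

theorem ClosedUnder.rename {u : Lam} {n m : ℕ} {ρ : ℕ → ℕ} (hu : ClosedUnder n u)
    (hρ : ∀ i < n, ρ i < m) : ClosedUnder m (u.rename ρ) := by
  induction u generalizing n m ρ with
  | var i => exact hρ i hu
  | app u v ihu ihv => exact ⟨ihu hu.1 hρ, ihv hu.2 hρ⟩
  | abs u ih =>
    refine ih (n := n + 1) (m := m + 1) hu fun i hi => ?_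
    cases i with
    | zero => exact Nat.succ_pos m
    | succ i => exact Nat.succ_lt_succ (hρ i (Nat.lt_of_succ_lt_succ hi))

theorem ClosedUnder.subst {u : Lam} {n m : ℕ} {σ : ℕ → Lam} (hu : ClosedUnder n u)
    (hσ : ∀ i < n, ClosedUnder m (σ i)) : ClosedUnder m (u.subst σ) := by
  induction u generalizing n m σ with
  | var i => exact hσ i hu
  | app u v ihu ihv => exact ⟨ihu hu.1 hσ, ihv hu.2 hσ⟩
  | abs u ih =>
    refine ih (n := n + 1) (m := m + 1) hu fun i hi => ?_
    cases i with
    | zero => exact Nat.succ_pos m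
    | succ i => exact (hσ i (Nat.lt_of_succ_lt_succ hi)).rename fun _ => Nat.succ_lt_succ

theorem ClosedUnder.subst0 {u v : Lam} {n : ℕ} (hu : ClosedUnder (n + 1) u)
    (hv : ClosedUnder n v) : ClosedUnder n (u.subst0 v) := by
  refine ClosedUnder.subst hu fun i hi => ?_
  cases i with
  | zero => exact hv
  | succ i => exact Nat.lt_of_succ_lt_succ hi

theorem ClosedUnder.subst_congr {u : Lam} {n : ℕ} {σ σ' : ℕ → Lam} (hu : ClosedUnder n u)
    (h : ∀ i < n, σ i = σ' i) : u.subst σ = u.subst σ' := by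
  induction u generalizing n σ σ' with
  | var i => exact h i hu
  | app u v ihu ihv => simp only [Lam.subst, ihu hu.1 h, ihv hu.2 h]
  | abs u ih =>
    refine congrArg abs (ih (n := n + 1) hu fun i hi => ?_)
    cases i with
    | zero => rfl
    | succ i => simp only [liftSub, h i (Nat.lt_of_succ_lt_succ hi)]

theorem Closed.subst_congr {u : Lam} (hu : Closed u) (σ σ' : ℕ → Lam) : u.subst σ = u.subst σ' :=
  ClosedUnder.subst_congr hu fun i hi => absurd hi (Nat.not_lt_zero i)

theorem Closed.subst_eq {u : Lam} (hu : Closed u) (σ : ℕ → Lam) : u.subst σ = u := by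
  rw [hu.subst_congr σ var, subst_var]

/-! ### Confluence -/

/-- β-reduction in any number of steps. -/
abbrev BetaRed : Lam → Lam → Prop := ReflTransGen Beta

theorem BetaRed.app {u u' v v' : Lam} (hu : BetaRed u u') (hv : BetaRed v v') :
    BetaRed (app u v) (app u' v') :=
  (hu.lift (fun x => Lam.app x v) fun _ _ => Beta.appL v).trans
    (hv.lift (fun x => Lam.app u' x) fun _ _ => Beta.appR u')

theorem BetaRed.abs {u u' : Lam} (hu : BetaRed u u') : BetaRed (abs u) (abs u') :=
  hu.lift Lam.abs fun _ _ => Beta.abs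

theorem BetaRed.betaEq {u v : Lam} (h : BetaRed u v) : BetaEq u v :=
  EqvGen.reflTransGen_le_eqvGen Beta u v h

theorem BetaEq.refl (u : Lam) : BetaEq u u := EqvGen.refl u

theorem BetaEq.symm {u v : Lam} (h : BetaEq u v) : BetaEq v u := EqvGen.symm u v h

theorem BetaEq.trans {u v w : Lam} (h : BetaEq u v) (h' : BetaEq v w) : BetaEq u w :=
  EqvGen.trans u v w h h'

theorem BetaEq.map {g : Lam → Lam} (hg : ∀ u v, Beta u v → Beta (g u) (g v)) {u v : Lam}
    (h : BetaEq u v) : BetaEq (g u) (g v) := by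
  induction h with
  | rel u v h => exact EqvGen.rel _ _ (hg u v h)
  | refl u => exact BetaEq.refl _
  | symm _ _ _ ih => exact ih.symm
  | trans _ _ _ _ _ ih ih' => exact ih.trans ih'

theorem BetaEq.app {u u' v v' : Lam} (hu : BetaEq u u') (hv : BetaEq v v') :
    BetaEq (app u v) (app u' v') :=
  (hu.map fun _ _ => Beta.appL v).trans (hv.map fun _ _ => Beta.appR u')

/-- Parallel β-reduction (Tait, Martin-Löf): contracts any set of redexes of the term. -/
inductive ParBeta : Lam → Lam → Prop
  | var (i) : ParBeta (var i) (var i)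
  | app {u u' v v'} : ParBeta u u' → ParBeta v v' → ParBeta (app u v) (app u' v')
  | abs {u u'} : ParBeta u u' → ParBeta (abs u) (abs u')
  | beta {u u' v v'} : ParBeta u u' → ParBeta v v' → ParBeta (app (abs u) v) (u'.subst0 v')

theorem ParBeta.refl (u : Lam) : ParBeta u u := by
  induction u with
  | var i => exact .var i
  | app _ _ hu hv => exact .app hu hv
  | abs _ hu => exact .abs hu

theorem ParBeta.rename {u u' : Lam} (h : ParBeta u u') (ρ : ℕ → ℕ) :
    ParBeta (u.rename ρ) (u'.rename ρ) := by
  induction h generalizing ρ with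
  | var i => exact .var _
  | app _ _ ihu ihv => exact .app (ihu ρ) (ihv ρ)
  | abs _ ih => exact .abs (ih _)
  | beta _ _ ihu ihv => rw [subst0_rename]; exact .beta (ihu _) (ihv ρ)

theorem ParBeta.liftSub {σ σ' : ℕ → Lam} (h : ∀ i, ParBeta (σ i) (σ' i)) :
    ∀ i, ParBeta (liftSub σ i) (liftSub σ' i)
  | 0 => .var 0
  | i + 1 => (h i).rename _

theorem ParBeta.subst {u u' : Lam} (h : ParBeta u u') {σ σ' : ℕ → Lam}
    (hσ : ∀ i, ParBeta (σ i) (σ' i)) : ParBeta (u.subst σ) (u'.subst σ') := by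
  induction h generalizing σ σ' with
  | var i => exact hσ i
  | app _ _ ihu ihv => exact .app (ihu hσ) (ihv hσ)
  | abs _ ih => exact .abs (ih (ParBeta.liftSub hσ))
  | beta _ _ ihu ihv => rw [subst0_subst]; exact .beta (ihu (ParBeta.liftSub hσ)) (ihv hσ)

theorem ParBeta.subst0 {u u' v v' : Lam} (hu : ParBeta u u') (hv : ParBeta v v') :
    ParBeta (u.subst0 v) (u'.subst0 v') :=
  hu.subst (forall_scons hv .var)

/-- Takahashi's complete development: contracts all redexes of the term at once. -/
def develop : Lam → Lam
  | var i => var i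
  | abs u => abs (develop u)
  | app (abs u) v => (develop u).subst0 (develop v)
  | app (var i) v => app (var i) (develop v)
  | app (app u u') v => app (develop (app u u')) (develop v)

theorem ParBeta.to_develop {u v : Lam} (h : ParBeta u v) : ParBeta v (develop u) := by
  induction h with
  | var i => exact .var i
  | abs _ ih => exact .abs ih
  | beta _ _ ihu ihv => exact ihu.subst0 ihv
  | @app u _ _ _ hu _ ihu ihv =>
    cases u with
    | var i => cases hu; exact .app (.var i) ihv
    | app => exact .app ihu ihv
    | abs =>
      cases hu with
      | abs => cases ihu with
        | abs ihu => exact .beta ihu ihv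

theorem Beta.parBeta {u v : Lam} (h : Beta u v) : ParBeta u v := by
  induction h with
  | beta u v => exact .beta (.refl u) (.refl v)
  | appL v _ ih => exact .app ih (.refl v)
  | appR u _ ih => exact .app (.refl u) ih
  | abs _ ih => exact .abs ih

theorem ParBeta.betaRed {u v : Lam} (h : ParBeta u v) : BetaRed u v := by
  induction h with
  | var i => exact .refl
  | app _ _ ihu ihv => exact ihu.app ihv
  | abs _ ih => exact ih.abs
  | beta _ _ ihu ihv => exact (ihu.abs.app ihv).tail (.beta _ _)

theorem BetaEq.join {u v : Lam} (h : BetaEq u v) : Join BetaRed u v := by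
  have hequiv : Equivalence (Join (ReflTransGen ParBeta)) := equivalence_join_reflTransGen
    fun u _ _ hv hw => ⟨develop u, .single hv.to_develop, .single hw.to_develop⟩
  obtain ⟨w, hu, hv⟩ := hequiv.eqvGen_iff.1 <|
    EqvGen.mono (fun u v h => ⟨v, .single h.parBeta, .refl⟩) u v h
  have hred : ReflTransGen ParBeta ≤ BetaRed := reflTransGen_closed fun _ _ => ParBeta.betaRed
  exact ⟨w, hred u w hu, hred v w hv⟩

theorem BetaEq.betaRed_of_normal {u t : Lam} (h : BetaEq u t) (ht : Normal t) : BetaRed u t := by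
  obtain ⟨w, hu, hw⟩ := h.join
  rwa [(reflTransGen_iff_eq ht).1 hw] at hu

/-! ### Weak head reduction and standardization -/

/-- Head reduction that does not enter abstractions. It agrees with head reduction on reductions
to terms other than abstractions, and is stable under application and substitution. -/
inductive WeakHeadStep : Lam → Lam → Prop
  | beta (u v) : WeakHeadStep (app (abs u) v) (u.subst0 v)
  | appL {u u'} (v) : WeakHeadStep u u' → WeakHeadStep (app u v) (app u' v)

/-- Weak head reduction in any number of steps. -/
abbrev WeakHeadRed : Lam → Lam → Prop := ReflTransGen WeakHeadStep

theorem WeakHeadStep.rightUnique : Relator.RightUnique WeakHeadStep := by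
  intro u v w hv hw
  induction hv generalizing w with
  | beta u v =>
    cases hw with
    | beta => rfl
    | appL _ h => cases h
  | appL v h ih =>
    cases hw with
    | beta => cases h
    | appL _ hw => rw [ih hw]

theorem WeakHeadStep.subst {u v : Lam} (h : WeakHeadStep u v) (σ : ℕ → Lam) :
    WeakHeadStep (u.subst σ) (v.subst σ) := by
  induction h with
  | beta u v => rw [subst0_subst]; exact .beta _ _
  | appL v _ ih => exact .appL _ ih

theorem WeakHeadStep.to_beta {u v : Lam} (h : WeakHeadStep u v) : Beta u v := by
  induction h with
  | beta u v => exact .beta u v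
  | appL v _ ih => exact .appL v ih

theorem WeakHeadStep.closedUnder {u v : Lam} (h : WeakHeadStep u v) {n : ℕ}
    (hu : ClosedUnder n u) : ClosedUnder n v := by
  induction h with
  | beta u v => exact ClosedUnder.subst0 hu.1 hu.2
  | appL v _ ih => exact ⟨ih hu.1, hu.2⟩

theorem not_weakHeadStep_abs (u v : Lam) : ¬ WeakHeadStep (abs u) v := nofun

theorem WeakHeadRed.appL {u u' : Lam} (h : WeakHeadRed u u') (v : Lam) :
    WeakHeadRed (app u v) (app u' v) :=
  h.lift (fun x => app x v) fun _ _ => .appL v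

theorem WeakHeadRed.subst {u v : Lam} (h : WeakHeadRed u v) (σ : ℕ → Lam) :
    WeakHeadRed (u.subst σ) (v.subst σ) :=
  h.lift (fun x => x.subst σ) fun _ _ h => h.subst σ

theorem WeakHeadRed.rename {u v : Lam} (h : WeakHeadRed u v) (ρ : ℕ → ℕ) :
    WeakHeadRed (u.rename ρ) (v.rename ρ) := by
  simp only [rename_eq_subst]
  exact h.subst _

theorem WeakHeadRed.betaRed {u v : Lam} (h : WeakHeadRed u v) : BetaRed u v :=
  ReflTransGen.mono (fun _ _ => WeakHeadStep.to_beta) u v h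

theorem WeakHeadRed.cancel_left {u v w : Lam} (huw : WeakHeadRed u w)
    (hw : ∀ x, ¬ WeakHeadStep w x) (huv : WeakHeadRed u v) : WeakHeadRed v w := by
  rcases ReflTransGen.total_of_right_unique WeakHeadStep.rightUnique huv huw with h | h
  · exact h
  · rw [(reflTransGen_iff_eq hw).1 h]

theorem WeakHeadRed.acc {u v : Lam} (h : WeakHeadRed u v) (hv : ∀ w, ¬ WeakHeadStep v w) :
    Acc (swap WeakHeadStep) u := by
  induction h using ReflTransGen.head_induction_on with
  | refl => exact ⟨_, fun w hw => absurd hw (hv w)⟩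
  | head hstep _ ih => exact ⟨_, fun w hw => WeakHeadStep.rightUnique hstep hw ▸ ih⟩

theorem WeakHeadStep.headStep {u v : Lam} (h : WeakHeadStep u v) : HeadStep u v := by
  induction h with
  | beta u v => exact .beta u v
  | appL v h ih => exact .appL v (by cases h <;> exact id) ih

theorem WeakHeadRed.headRed {u v : Lam} (h : WeakHeadRed u v) : HeadRed u v := by
  induction h using ReflTransGen.head_induction_on with
  | refl => exact ⟨0, .refl v⟩
  | head hstep _ ih =>
    obtain ⟨n, hn⟩ := ih
    exact ⟨n + 1, .step hstep.headStep hn⟩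

theorem HeadStep.weakHeadStep {u v : Lam} (h : HeadStep u v) (hu : ¬ u.IsAbs) :
    WeakHeadStep u v := by
  induction h with
  | beta u v => exact .beta u v
  | appL v hu' _ ih => exact .appL v (ih hu')
  | abs => exact absurd trivial hu

theorem HeadStep.isAbs {u v : Lam} (h : HeadStep u v) (hu : u.IsAbs) : v.IsAbs := by
  cases h with
  | beta => exact hu.elim
  | appL => exact hu.elim
  | abs => trivial

theorem HeadRedN.isAbs {n : ℕ} {u v : Lam} (h : HeadRedN n u v) (hu : u.IsAbs) : v.IsAbs := by
  induction h with
  | refl => exact hu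
  | step hstep _ ih => exact ih (hstep.isAbs hu)

theorem HeadRed.weakHeadRed {u v : Lam} (h : HeadRed u v) (hv : ¬ v.IsAbs) :
    WeakHeadRed u v := by
  obtain ⟨n, hn⟩ := h
  induction hn with
  | refl => exact .refl
  | step hstep hn ih =>
    exact .head (hstep.weakHeadStep fun hu => hv (hn.isAbs (hstep.isAbs hu))) (ih hv)

/-- `Unfolds R θ s`: the term `s` is built from `θ` by exposing its constructors one by one, from
the root to the leaves, along `R`. For `R = WeakHeadRed` this is standard β-reduction. -/
inductive Unfolds (R : Lam → Lam → Prop) : Lam → Lam → Prop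
  | var {θ i} : R θ (var i) → Unfolds R θ (var i)
  | app {θ u v s s'} : R θ (app u v) → Unfolds R u s → Unfolds R v s' → Unfolds R θ (app s s')
  | abs {θ u s} : R θ (abs u) → Unfolds R u s → Unfolds R θ (abs s)

theorem Unfolds.betaRed {R : Lam → Lam → Prop} (hR : R ≤ BetaRed) {θ s : Lam}
    (h : Unfolds R θ s) : BetaRed θ s := by
  induction h with
  | var hθ => exact hR _ _ hθ
  | app hθ _ _ ihu ihv => exact (hR _ _ hθ).trans (ihu.app ihv)
  | abs hθ _ ih => exact (hR _ _ hθ).trans ih.abs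

/-- Standard β-reduction. -/
abbrev StdRed : Lam → Lam → Prop := Unfolds WeakHeadRed

theorem StdRed.refl (u : Lam) : StdRed u u := by
  induction u with
  | var i => exact .var .refl
  | app u v hu hv => exact .app .refl hu hv
  | abs u hu => exact .abs .refl hu

theorem WeakHeadRed.trans_stdRed {u v w : Lam} (h : WeakHeadRed u v) (h' : StdRed v w) :
    StdRed u w := by
  cases h' with
  | var hv => exact .var (h.trans hv)
  | app hv h₁ h₂ => exact .app (h.trans hv) h₁ h₂
  | abs hv h₁ => exact .abs (h.trans hv) h₁

theorem StdRed.rename {u u' : Lam} (h : StdRed u u') (ρ : ℕ → ℕ) :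
    StdRed (u.rename ρ) (u'.rename ρ) := by
  induction h generalizing ρ with
  | var hu => exact .var (hu.rename ρ)
  | app hu _ _ ih₁ ih₂ => exact .app (hu.rename ρ) (ih₁ ρ) (ih₂ ρ)
  | abs hu _ ih => exact .abs (hu.rename ρ) (ih _)

theorem StdRed.liftSub {σ σ' : ℕ → Lam} (h : ∀ i, StdRed (σ i) (σ' i)) :
    ∀ i, StdRed (liftSub σ i) (liftSub σ' i)
  | 0 => .refl _
  | i + 1 => (h i).rename _

theorem StdRed.subst {u u' : Lam} (h : StdRed u u') {σ σ' : ℕ → Lam}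
    (hσ : ∀ i, StdRed (σ i) (σ' i)) : StdRed (u.subst σ) (u'.subst σ') := by
  induction h generalizing σ σ' with
  | var hu => exact (hu.subst σ).trans_stdRed (hσ _)
  | app hu _ _ ih₁ ih₂ => exact .app (hu.subst σ) (ih₁ hσ) (ih₂ hσ)
  | abs hu _ ih => exact .abs (hu.subst σ) (ih (StdRed.liftSub hσ))

theorem StdRed.tail {u v w : Lam} (h : StdRed u v) (h' : Beta v w) : StdRed u w := by
  induction h' generalizing u with
  | beta a b =>
    cases h with
    | app hu habs hb => cases habs with
      | abs hf ha =>
        have hcontract : WeakHeadRed _ _ := (hu.trans (hf.appL _)).tail (.beta _ _)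
        exact hcontract.trans_stdRed (StdRed.subst ha (forall_scons hb fun _ => .refl _))
  | appL v _ ih => cases h with | app hu h₁ h₂ => exact .app hu (ih h₁) h₂
  | appR v _ ih => cases h with | app hu h₁ h₂ => exact .app hu h₁ (ih h₂)
  | abs _ ih => cases h with | abs hu h₁ => exact .abs hu (ih h₁)

theorem BetaRed.stdRed {u v : Lam} (h : BetaRed u v) : StdRed u v := by
  induction h with
  | refl => exact .refl u
  | tail _ hstep ih => exact ih.tail hstep

/-! ### Terms with a head variable -/

/-- The term is `(x)w₁…wₖ` for a variable `x` whose index satisfies `P`. -/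
def HeadVar (P : ℕ → Prop) : Lam → Prop
  | var i => P i
  | app u _ => HeadVar P u
  | abs _ => False

theorem HeadVar.subst {P Q : ℕ → Prop} {u : Lam} {σ : ℕ → Lam} (hu : HeadVar P u)
    (hσ : ∀ i, P i → HeadVar Q (σ i)) : HeadVar Q (u.subst σ) := by
  induction u with
  | var i => exact hσ i hu
  | app u v ihu _ => exact ihu hu
  | abs => exact hu.elim

theorem HeadVar.rename {P Q : ℕ → Prop} {u : Lam} {ρ : ℕ → ℕ} (hu : HeadVar P u)
    (hρ : ∀ i, P i → Q (ρ i)) : HeadVar Q (u.rename ρ) := by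
  rw [rename_eq_subst]
  exact hu.subst hρ

theorem HeadVar.beta {P : ℕ → Prop} {u v : Lam} (hu : HeadVar P u) (h : Beta u v) :
    HeadVar P v := by
  induction h with
  | beta => exact hu.elim
  | appL _ _ ih => exact ih hu
  | appR => exact hu
  | abs => exact hu.elim

theorem HeadVar.not_weakHeadStep {P : ℕ → Prop} {u : Lam} (hu : HeadVar P u) (v : Lam) :
    ¬ WeakHeadStep u v := by
  intro h
  induction h with
  | beta => exact hu
  | appL _ _ ih => exact ih hu

theorem HeadVar.not_closedUnder {k : ℕ} {u : Lam} (hu : HeadVar (k ≤ ·) u) :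
    ¬ ClosedUnder k u := by
  induction u with
  | var i => exact Nat.not_lt.2 hu
  | app u v ihu _ => exact fun h => ihu hu h.1
  | abs => exact hu.elim

theorem headVar_or_weakHeadStep_or_abs (P : ℕ → Prop) (u : Lam) :
    HeadVar P u ∨ HeadVar (fun i => ¬ P i) u ∨ (∃ v, WeakHeadStep u v) ∨ ∃ v, u = abs v := by
  induction u with
  | var i => exact (em (P i)).imp_right .inl
  | abs u => exact .inr (.inr (.inr ⟨u, rfl⟩))
  | app u v ih =>
    rcases ih with h | h | ⟨u', h⟩ | ⟨u', rfl⟩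
    · exact .inl h
    · exact .inr (.inl h)
    · exact .inr (.inr (.inl ⟨_, .appL v h⟩))
    · exact .inr (.inr (.inl ⟨_, .beta u' v⟩))

/-- `NeutralEq u u'`: both terms are applications of one and the same variable to equally many
arguments, which are pairwise β-equivalent. -/
inductive NeutralEq : Lam → Lam → Prop
  | var (i) : NeutralEq (var i) (var i)
  | app {u u' v v'} : NeutralEq u u' → BetaEq v v' → NeutralEq (app u v) (app u' v')

theorem HeadVar.neutralEq {P : ℕ → Prop} {u : Lam} (hu : HeadVar P u) : NeutralEq u u := by
  induction u with
  | var i => exact .var i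
  | app u v ihu _ => exact .app (ihu hu) (.refl v)
  | abs => exact hu.elim

theorem NeutralEq.tail {u v w : Lam} (h : NeutralEq u v) (h' : Beta v w) : NeutralEq u w := by
  induction h generalizing w with
  | var => cases h'
  | app hu hv ih =>
    cases h' with
    | beta => cases hu
    | appL _ h' => exact .app (ih h') hv
    | appR _ h' => exact .app hu (hv.trans (.rel _ _ h'))

theorem NeutralEq.trans_betaRed {u v w : Lam} (h : NeutralEq u v) (h' : BetaRed v w) :
    NeutralEq u w := by
  induction h' with
  | refl => exact h
  | tail _ hstep ih => exact ih.tail hstep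

theorem NeutralEq.weakHeadRed_of_stdRed {u v w : Lam} (huw : NeutralEq u w) (hvw : StdRed v w) :
    ∃ v', WeakHeadRed v v' ∧ NeutralEq u v' := by
  induction huw generalizing v with
  | var i => cases hvw with | var hv => exact ⟨_, hv, .var i⟩
  | app _ ha ih =>
    cases hvw with
    | app hv hf hb =>
      obtain ⟨f, hf, hneutral⟩ := ih hf
      have hb : BetaRed _ _ := hb.betaRed fun _ _ => WeakHeadRed.betaRed
      exact ⟨_, hv.trans (hf.appL _), .app hneutral (ha.trans hb.betaEq.symm)⟩

theorem BetaEq.weakHeadRed_neutralEq {P : ℕ → Prop} {u v : Lam} (h : BetaEq u v)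
    (hu : HeadVar P u) : ∃ v', WeakHeadRed v v' ∧ NeutralEq u v' := by
  obtain ⟨w, huw, hvw⟩ := h.join
  exact (hu.neutralEq.trans_betaRed huw).weakHeadRed_of_stdRed hvw.stdRed

/-! ### Running a term with an opaque argument -/

/-- An opaque subterm of `t`, seen through a variable: the term `body` whose free variables have
been instantiated by `args`. -/
structure Box where
  body : Lam
  args : ℕ → Lam

/-- A state of a run: the current term, and the boxes its variables stand for. The variables from
`next` on are fresh. The variable `0` is the fresh variable `f`, and the box `env 0` is ignored. -/
structure State where
  next : ℕ
  env : ℕ → Box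
  code : Lam

/-- Exposure of the outermost constructor of the box in head position. -/
inductive Unbox : State → State → Prop
  | var {n E j i ρ} : j ≠ 0 → E j = ⟨var i, ρ⟩ → Unbox ⟨n, E, var j⟩ ⟨n, E, ρ i⟩
  | app {n E j s s' ρ} : j ≠ 0 → E j = ⟨app s s', ρ⟩ →
      Unbox ⟨n, E, var j⟩
        ⟨n + 2, update (update E n ⟨s, ρ⟩) (n + 1) ⟨s', ρ⟩, app (var n) (var (n + 1))⟩
  | abs {n E j s ρ} (u) : j ≠ 0 → E j = ⟨abs s, ρ⟩ →
      Unbox ⟨n, E, app (var j) u⟩ ⟨n + 1, update E n ⟨s, scons u ρ⟩, var n⟩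
  | appL {n E u n' E' u'} (v) : Unbox ⟨n, E, u⟩ ⟨n', E', u'⟩ →
      Unbox ⟨n, E, app u v⟩ ⟨n', E', app u' v⟩

/-- One step of a run. -/
inductive Step : State → State → Prop
  | weakHead {n E u v} : WeakHeadStep u v → Step ⟨n, E, u⟩ ⟨n, E, v⟩
  | unbox {S S'} : Unbox S S' → Step S S'

/-- A run: any number of steps. -/
abbrev Run : State → State → Prop := ReflTransGen Step

theorem WeakHeadRed.run {u v : Lam} (h : WeakHeadRed u v) (n : ℕ) (E : ℕ → Box) :
    Run ⟨n, E, u⟩ ⟨n, E, v⟩ :=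
  h.lift (fun w => State.mk n E w) fun _ _ => .weakHead

theorem Unbox.headVar {S S' : State} (h : Unbox S S') : HeadVar (· ≠ 0) S.code := by
  induction h with
  | var hj | app hj | abs _ hj => exact hj
  | appL _ _ ih => exact ih

theorem exists_unbox_or_eq_var {n : ℕ} {E : ℕ → Box} {u : Lam} (hu : HeadVar (· ≠ 0) u) :
    (∃ S, Unbox ⟨n, E, u⟩ S) ∨ ∃ j s ρ, j ≠ 0 ∧ u = Lam.var j ∧ E j = ⟨Lam.abs s, ρ⟩ := by
  induction u with
  | var j =>
    rcases hE : E j with ⟨_ | _ | _, ρ⟩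
    · exact .inl ⟨_, .var hu hE⟩
    · exact .inl ⟨_, .app hu hE⟩
    · exact .inr ⟨j, _, ρ, hu, rfl, hE⟩
  | app u v ihu _ =>
    rcases ihu hu with ⟨S, h⟩ | ⟨j, s, ρ, hj, rfl, hE⟩
    · exact .inl ⟨_, .appL v h⟩
    · exact .inl ⟨_, .abs v hj hE⟩
  | abs => exact hu.elim

/-- The variables from `n` on do not occur in the arguments of the boxes. -/
structure ScopedEnv (n : ℕ) (E : ℕ → Box) : Prop where
  pos : 0 < n
  args : ∀ j i, ClosedUnder n ((E j).args i)

/-- The variables from `next` on do not occur in the state. -/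
structure State.Scoped (S : State) : Prop where
  env : ScopedEnv S.next S.env
  code : ClosedUnder S.next S.code

theorem ScopedEnv.closedUnder_of_eq {n j : ℕ} {E : ℕ → Box} (hE : ScopedEnv n E) {s : Lam}
    {ρ : ℕ → Lam} (h : E j = ⟨s, ρ⟩) (i : ℕ) : ClosedUnder n (ρ i) := by
  simpa only [h] using hE.args j i

theorem ScopedEnv.update {n : ℕ} {E : ℕ → Box} (hE : ScopedEnv n E) {b : Box}
    (hb : ∀ i, ClosedUnder n (b.args i)) : ScopedEnv (n + 1) (update E n b) where
  pos := n.succ_pos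
  args j i := by
    rcases eq_or_ne j n with rfl | hj
    · simpa only [update_self] using (hb i).mono (Nat.le_succ _)
    · simpa only [update_of_ne hj] using (hE.args j i).mono (Nat.le_succ n)

theorem closedUnder_scons {n : ℕ} {u : Lam} {ρ : ℕ → Lam} (hu : ClosedUnder n u)
    (hρ : ∀ i, ClosedUnder n (ρ i)) : ∀ i, ClosedUnder n (scons u ρ i)
  | 0 => hu
  | i + 1 => hρ i

theorem Unbox.scoped {S S' : State} (h : Unbox S S') (hS : S.Scoped) :
    S.next ≤ S'.next ∧ S'.Scoped := by
  induction h with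
  | @var _ _ _ i _ _ hE => exact ⟨le_rfl, hS.env, hS.env.closedUnder_of_eq hE i⟩
  | @app n E j s s' ρ _ hE =>
    have hρ : ∀ i, ClosedUnder n (ρ i) := hS.env.closedUnder_of_eq hE
    exact ⟨Nat.le_add_right n 2,
      (hS.env.update (b := ⟨s, ρ⟩) hρ).update (b := ⟨s', ρ⟩) fun i => (hρ i).mono n.le_succ,
      Nat.lt_add_of_pos_right Nat.two_pos, Nat.lt_succ_self (n + 1)⟩
  | @abs n E j s ρ u _ hE =>
    have hρ : ∀ i, ClosedUnder n (ρ i) := hS.env.closedUnder_of_eq hE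
    exact ⟨n.le_succ, hS.env.update (closedUnder_scons hS.code.2 hρ), n.lt_succ_self⟩
  | appL v _ ih =>
    obtain ⟨hle, hscoped⟩ := ih ⟨hS.env, hS.code.1⟩
    exact ⟨hle, hscoped.env, hscoped.code, hS.code.2.mono hle⟩

theorem Step.scoped {S S' : State} (h : Step S S') (hS : S.Scoped) :
    S.next ≤ S'.next ∧ S'.Scoped := by
  cases h with
  | weakHead h => exact ⟨le_rfl, hS.env, h.closedUnder hS.code⟩
  | unbox h => exact h.scoped hS

/-! ### Runs simulate weak head reduction -/

/-- The actual term `x` may stand for the box `b` when `σ` is substituted for the variables: it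
unfolds along `R` to the body of `b`, up to an instantiation `r` of free variables. The third
condition demands that `r` agrees with `b.args` only on the free variables of the body, since `θ`
may have more of them. -/
def Box.RealizedBy (R : Lam → Lam → Prop) (σ : ℕ → Lam) (b : Box) (x : Lam) : Prop :=
  ∃ θ r, Unfolds R θ b.body ∧ x = θ.subst r ∧
    b.body.subst r = b.body.subst fun i => (b.args i).subst σ

/-- The substitution `σ` replaces the variables by actual terms for their boxes. -/
structure Realizes (R : Lam → Lam → Prop) (E : ℕ → Box) (σ : ℕ → Lam) : Prop where
  zero : σ 0 = var 0
  box : ∀ j ≠ 0, (E j).RealizedBy R σ (σ j)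

theorem Box.RealizedBy.congr {R : Lam → Lam → Prop} {σ σ' : ℕ → Lam} {b : Box} {x : Lam} {n : ℕ}
    (h : b.RealizedBy R σ x) (hb : ∀ i, ClosedUnder n (b.args i)) (hσ : ∀ i < n, σ i = σ' i) :
    b.RealizedBy R σ' x := by
  obtain ⟨θ, r, hθ, hx, hr⟩ := h
  refine ⟨θ, r, hθ, hx, hr.trans ?_⟩
  congr 1
  funext i
  exact (hb i).subst_congr hσ

theorem eq_update_of_lt {n i : ℕ} (hi : i < n) (σ : ℕ → Lam) (x : Lam) : σ i = update σ n x i :=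
  (update_of_ne hi.ne x σ).symm

theorem Realizes.update {R : Lam → Lam → Prop} {E : ℕ → Box} {σ : ℕ → Lam} {n : ℕ}
    (hσ : Realizes R E σ) (hE : ScopedEnv n E) {b : Box} {x : Lam}
    (hb : ∀ i, ClosedUnder n (b.args i)) (hx : b.RealizedBy R σ x) :
    Realizes R (update E n b) (update σ n x) where
  zero := by rw [update_of_ne hE.pos.ne, hσ.zero]
  box j hj := by
    rcases eq_or_ne j n with rfl | hjn
    · simpa only [update_self] using hx.congr hb fun i hi => eq_update_of_lt hi σ x
    · simpa only [update_of_ne hjn] using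
        (hσ.box j hj).congr (hE.args j) fun i hi => eq_update_of_lt hi σ x

/-- The closure properties of weak head reduction in any number, or in any positive number, of
steps that make it simulate a run. -/
structure IsHeadCompatible (Q : Lam → Lam → Prop) : Prop where
  single {u v} : WeakHeadStep u v → Q u v
  tail {u v w} : Q u v → WeakHeadStep v w → Q u w
  appL {u u'} (v) : Q u u' → Q (app u v) (app u' v)
  subst {u v} (σ) : Q u v → Q (u.subst σ) (v.subst σ)

theorem isHeadCompatible_weakHeadRed : IsHeadCompatible WeakHeadRed where
  single := .single
  tail := .tail
  appL v h := WeakHeadRed.appL h v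
  subst σ h := WeakHeadRed.subst h σ

theorem isHeadCompatible_transGen : IsHeadCompatible (TransGen WeakHeadStep) where
  single := .single
  tail := .tail
  appL v h := h.lift (fun x => app x v) fun _ _ => .appL v
  subst σ h := h.lift (fun x => x.subst σ) fun _ _ h => h.subst σ

section Simulation

variable {R Q : Lam → Lam → Prop} {E : ℕ → Box} {σ : ℕ → Lam} {j : ℕ} {ρ : ℕ → Lam}

theorem Realizes.of_var (hQ : IsHeadCompatible Q) (hRQ : R ≤ Q) (hσ : Realizes R E σ)
    (hj : j ≠ 0) {i : ℕ} (hE : E j = ⟨var i, ρ⟩) : Q (σ j) ((ρ i).subst σ) := by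
  obtain ⟨θ, r, hθ, hx, hr⟩ := hE ▸ hσ.box j hj
  cases hθ with
  | var hθ =>
    have hri : r i = (ρ i).subst σ := hr
    rw [hx, ← hri]
    exact hQ.subst r (hRQ _ _ hθ)

theorem Realizes.of_app (hQ : IsHeadCompatible Q) (hRQ : R ≤ Q) (hσ : Realizes R E σ)
    (hj : j ≠ 0) {s s' : Lam} (hE : E j = ⟨app s s', ρ⟩) :
    ∃ x y, Box.RealizedBy R σ ⟨s, ρ⟩ x ∧ Box.RealizedBy R σ ⟨s', ρ⟩ y ∧ Q (σ j) (app x y) := by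
  obtain ⟨θ, r, hθ, hx, hr⟩ := hE ▸ hσ.box j hj
  cases hθ with
  | app hθ hs hs' =>
    obtain ⟨hr, hr'⟩ := Lam.app.inj hr
    rw [hx]
    exact ⟨_, _, ⟨_, r, hs, rfl, hr⟩, ⟨_, r, hs', rfl, hr'⟩, hQ.subst r (hRQ _ _ hθ)⟩

theorem Realizes.of_abs (hQ : IsHeadCompatible Q) (hRQ : R ≤ Q) (hσ : Realizes R E σ)
    (hj : j ≠ 0) {s : Lam} (hE : E j = ⟨abs s, ρ⟩) :
    ∃ x, Q (σ j) (abs x) ∧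
      ∀ u, Box.RealizedBy R σ ⟨s, scons u ρ⟩ (x.subst0 (u.subst σ)) := by
  obtain ⟨θ, r, hθ, hx, hr⟩ := hE ▸ hσ.box j hj
  cases hθ with
  | @abs _ w _ hθ hs =>
    refine ⟨w.subst (liftSub r), hx ▸ hQ.subst r (hRQ _ _ hθ), fun u => ?_⟩
    refine ⟨w, scons (u.subst σ) r, hs, subst_liftSub_subst0 _ _ _, ?_⟩
    have hlift := congrArg (fun v => v.subst0 (u.subst σ)) (Lam.abs.inj hr)
    simp only [subst_liftSub_subst0] at hlift
    refine hlift.trans ?_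
    congr 1
    funext i
    cases i <;> rfl

theorem Unbox.simulate (hQ : IsHeadCompatible Q) (hRQ : R ≤ Q) {S S' : State} (h : Unbox S S')
    (hS : S.Scoped) {σ : ℕ → Lam} (hσ : Realizes R S.env σ) :
    ∃ σ', Realizes R S'.env σ' ∧ (∀ i < S.next, σ i = σ' i) ∧
      Q (S.code.subst σ) (S'.code.subst σ') := by
  induction h with
  | var hj hE => exact ⟨σ, hσ, fun _ _ => rfl, hσ.of_var hQ hRQ hj hE⟩
  | @app n E j s s' ρ hj hE =>
    obtain ⟨x, y, hx, hy, hQxy⟩ := hσ.of_app hQ hRQ hj hE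
    have hρ : ∀ i, ClosedUnder n (ρ i) := hS.env.closedUnder_of_eq hE
    have hσx := hσ.update (b := ⟨s, ρ⟩) hS.env hρ hx
    have hy' := hy.congr hρ fun i hi => eq_update_of_lt hi σ x
    refine ⟨update (update σ n x) (n + 1) y,
      hσx.update (hS.env.update hρ) (fun i => (hρ i).mono n.le_succ) hy', fun i hi => ?_, ?_⟩
    · rw [← eq_update_of_lt (Nat.lt_succ_of_lt hi), ← eq_update_of_lt hi]
    · simpa only [Lam.subst, update_self, ← eq_update_of_lt n.lt_succ_self] using hQxy
  | @abs n E j s ρ u hj hE =>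
    obtain ⟨x, hQx, hx⟩ := hσ.of_abs hQ hRQ hj hE
    have hρ : ∀ i, ClosedUnder n (ρ i) := hS.env.closedUnder_of_eq hE
    refine ⟨update σ n (x.subst0 (u.subst σ)),
      hσ.update hS.env (closedUnder_scons hS.code.2 hρ) (hx u),
      fun i hi => eq_update_of_lt hi _ _, ?_⟩
    simpa only [Lam.subst, update_self] using hQ.tail (hQ.appL _ hQx) (.beta _ _)
  | appL v _ ih =>
    obtain ⟨σ', hσ', heq, hcode⟩ := ih ⟨hS.env, hS.code.1⟩ hσ
    refine ⟨σ', hσ', heq, ?_⟩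
    simpa only [Lam.subst, hS.code.2.subst_congr heq] using hQ.appL (v.subst σ') hcode

theorem Step.simulate (hQ : IsHeadCompatible Q) (hRQ : R ≤ Q) {S S' : State} (h : Step S S')
    (hS : S.Scoped) (hσ : Realizes R S.env σ) :
    ∃ σ', Realizes R S'.env σ' ∧ Q (S.code.subst σ) (S'.code.subst σ') := by
  cases h with
  | weakHead h => exact ⟨σ, hσ, hQ.single (h.subst σ)⟩
  | unbox h =>
    obtain ⟨σ', hσ', -, hcode⟩ := h.simulate hQ hRQ hS hσ
    exact ⟨σ', hσ', hcode⟩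

end Simulation

theorem Run.simulate {S S' : State} (h : Run S S') (hS : S.Scoped) {σ : ℕ → Lam}
    (hσ : Realizes WeakHeadRed S.env σ) :
    ∃ σ', Realizes WeakHeadRed S'.env σ' ∧
      WeakHeadRed (S.code.subst σ) (S'.code.subst σ') := by
  induction h using ReflTransGen.head_induction_on generalizing σ with
  | refl => exact ⟨σ, hσ, .refl⟩
  | head hstep _ ih =>
    obtain ⟨σ₁, hσ₁, hred₁⟩ := hstep.simulate isHeadCompatible_weakHeadRed le_rfl hS hσ
    obtain ⟨σ₂, hσ₂, hred₂⟩ := ih (hstep.scoped hS).2 hσ₁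
    exact ⟨σ₂, hσ₂, hred₁.trans hred₂⟩

theorem eq_app_var_zero_of_subst {σ : ℕ → Lam} (hσ : σ 0 = var 0) {c u : Lam}
    (hc : HeadVar (· = 0) c) (h : c.subst σ = app (var 0) u) :
    ∃ τ, c = app (var 0) τ ∧ τ.subst σ = u := by
  cases c with
  | var i => cases hc; cases hσ.symm.trans h
  | abs => exact hc.elim
  | app c τ =>
    obtain ⟨hhead, hτ⟩ := Lam.app.inj h
    cases c with
    | var i => cases hc; exact ⟨τ, rfl, hτ⟩
    | app => cases hhead
    | abs => exact hc.elim

theorem not_weakHeadRed_abs_app (u v w : Lam) : ¬ WeakHeadRed (abs u) (app v w) := fun h =>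
  nomatch (reflTransGen_iff_eq (not_weakHeadStep_abs u)).1 h

theorem exists_step_or_eq_app {R : Lam → Lam → Prop} (hR : R ≤ TransGen WeakHeadStep)
    {S : State} {σ : ℕ → Lam} (hσ : Realizes R S.env σ) {u : Lam}
    (h : WeakHeadRed (S.code.subst σ) (app (var 0) u)) :
    (∃ S', Step S S') ∨ ∃ τ, S.code = app (var 0) τ ∧ τ.subst σ = u := by
  obtain ⟨n, E, c⟩ := S
  rcases headVar_or_weakHeadStep_or_abs (· = 0) c with hc | hc | ⟨v, hv⟩ | ⟨v, rfl⟩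
  · have hnormal := (hc.subst fun i hi => (show HeadVar (· = 0) (σ i) by
      subst hi; rw [hσ.zero]; rfl)).not_weakHeadStep
    exact .inr (eq_app_var_zero_of_subst hσ.zero hc ((reflTransGen_iff_eq hnormal).1 h).symm)
  · rcases exists_unbox_or_eq_var (n := n) (E := E) hc with ⟨S', hS'⟩ | ⟨j, s, ρ, hj, rfl, hE⟩
    · exact .inl ⟨S', .unbox hS'⟩
    · obtain ⟨x, hx, -⟩ := hσ.of_abs isHeadCompatible_transGen hR hj hE
      have hstuck := WeakHeadRed.cancel_left h (HeadVar.not_weakHeadStep (P := (· = 0)) rfl)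
        hx.to_reflTransGen
      exact absurd hstuck (not_weakHeadRed_abs_app _ _ _)
  · exact .inl ⟨_, .weakHead hv⟩
  · exact absurd h (not_weakHeadRed_abs_app _ _ _)

/-- The weak head reduction of `S.code.subst σ` is finite and each step of the run consumes part
of it. -/
theorem exists_run_of_weakHeadRed {R : Lam → Lam → Prop} (hR : R ≤ TransGen WeakHeadStep)
    {S : State} (hS : S.Scoped) {σ : ℕ → Lam} (hσ : Realizes R S.env σ) {u : Lam}
    (h : WeakHeadRed (S.code.subst σ) (app (var 0) u)) :
    ∃ n E τ σ', Run S ⟨n, E, app (var 0) τ⟩ ∧ Realizes R E σ' ∧ τ.subst σ' = u := by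
  have hnormal : ∀ w, ¬ WeakHeadStep (app (var 0) u) w :=
    HeadVar.not_weakHeadStep (P := (· = 0)) rfl
  generalize hx : S.code.subst σ = x at h
  induction (h.acc hnormal).transGen generalizing S σ with
  | intro x _ ih =>
    subst hx
    rcases exists_step_or_eq_app hR hσ h with ⟨S', hstep⟩ | ⟨τ, hτ, hu⟩
    · obtain ⟨σ', hσ', hred⟩ := hstep.simulate isHeadCompatible_transGen hR hS hσ
      obtain ⟨n, E, τ, σ'', hrun, hτ⟩ := ih _ (transGen_swap.2 hred) (hstep.scoped hS).2 hσ' rfl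
        (h.cancel_left hnormal hred.to_reflTransGen)
      exact ⟨n, E, τ, σ'', .head hstep hrun, hτ⟩
    · obtain ⟨n, E, c⟩ := S
      cases hτ
      exact ⟨n, E, τ, σ, .refl, hσ, hu⟩

/-! ### Runs and β-equivalence -/

/-- The boxes have the same bodies and β-equivalent arguments. -/
def EnvEq (E E' : ℕ → Box) : Prop :=
  ∀ j, (E j).body = (E' j).body ∧ ∀ i, BetaEq ((E j).args i) ((E' j).args i)

/-- The states agree up to β-equivalence of their terms. -/
inductive StateEq : State → State → Prop
  | mk (n) {E E' u u'} : EnvEq E E' → BetaEq u u' → StateEq ⟨n, E, u⟩ ⟨n, E', u'⟩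

theorem EnvEq.exists_args {E E' : ℕ → Box} (h : EnvEq E E') {j : ℕ} {s : Lam} {ρ : ℕ → Lam}
    (hE : E j = ⟨s, ρ⟩) : ∃ ρ', E' j = ⟨s, ρ'⟩ ∧ ∀ i, BetaEq (ρ i) (ρ' i) := by
  obtain ⟨hbody, hargs⟩ := h j
  rw [hE] at hbody hargs
  exact ⟨(E' j).args, congrArg (Box.mk · _) hbody.symm, hargs⟩

theorem EnvEq.update {E E' : ℕ → Box} (h : EnvEq E E') (n : ℕ) (s : Lam) {ρ ρ' : ℕ → Lam}
    (hρ : ∀ i, BetaEq (ρ i) (ρ' i)) : EnvEq (update E n ⟨s, ρ⟩) (update E' n ⟨s, ρ'⟩) := by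
  intro j
  rcases eq_or_ne j n with rfl | hj
  · simpa only [update_self, true_and] using hρ
  · simpa only [update_of_ne hj] using h j

theorem Unbox.neutralEq {S S' : State} (h : Unbox S S') {E₁ : ℕ → Box} (hE₁ : EnvEq S.env E₁)
    {u₁ : Lam} (hu₁ : NeutralEq S.code u₁) :
    ∃ S₁, Unbox ⟨S.next, E₁, u₁⟩ S₁ ∧ StateEq S' S₁ := by
  induction h generalizing u₁ with
  | var hj hE =>
    cases hu₁
    obtain ⟨ρ₁, hE', hρ⟩ := hE₁.exists_args hE
    exact ⟨_, .var hj hE', .mk _ hE₁ (hρ _)⟩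
  | app hj hE =>
    cases hu₁
    obtain ⟨ρ₁, hE', hρ⟩ := hE₁.exists_args hE
    exact ⟨_, .app hj hE', .mk _ ((hE₁.update _ _ hρ).update _ _ hρ) (.refl _)⟩
  | abs u hj hE =>
    cases hu₁ with
    | app hvar hu =>
      cases hvar
      obtain ⟨ρ₁, hE', hρ⟩ := hE₁.exists_args hE
      exact ⟨_, .abs _ hj hE', .mk _ (hE₁.update _ _ (forall_scons hu hρ)) (.refl _)⟩
  | appL v _ ih =>
    cases hu₁ with
    | app hu hv =>
      obtain ⟨S₁, hstep, heq⟩ := ih hE₁ hu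
      cases heq with
      | mk _ hE hu => exact ⟨_, .appL _ hstep, .mk _ hE (hu.app hv)⟩

theorem Step.stateEq {S S' S₁ : State} (h : Step S S') (heq : StateEq S S₁) :
    ∃ S₁', Run S₁ S₁' ∧ StateEq S' S₁' := by
  obtain ⟨n, hE, hu⟩ := heq
  cases h with
  | weakHead h =>
    exact ⟨_, .refl, .mk n hE (BetaEq.trans (.symm (.rel _ _ h.to_beta)) hu)⟩
  | unbox h =>
    obtain ⟨u₁, hred, hneutral⟩ := hu.weakHeadRed_neutralEq h.headVar
    obtain ⟨S₁', hstep, heq⟩ := h.neutralEq hE hneutral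
    exact ⟨S₁', (hred.run n _).tail (.unbox hstep), heq⟩

theorem Run.stateEq {S S' S₁ : State} (h : Run S S') (heq : StateEq S S₁) :
    ∃ S₁', Run S₁ S₁' ∧ StateEq S' S₁' := by
  induction h with
  | refl => exact ⟨S₁, .refl, heq⟩
  | tail _ hstep ih =>
    obtain ⟨S₂, hrun, heq⟩ := ih
    obtain ⟨S₃, hrun', heq⟩ := hstep.stateEq heq
    exact ⟨S₃, hrun.trans hrun', heq⟩

/-! ### Padding with identities -/

/-- The tower `(I)I…I` of `N + 1` identities `I = λx.x`. -/
def idTower : ℕ → Lam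
  | 0 => abs (var 0)
  | N + 1 => app (idTower N) (abs (var 0))

/-- `x` in front of which a tower of identities has been put. -/
def pad (N : ℕ) (x : Lam) : Lam := app (idTower N) x

theorem weakHeadRed_idTower (N : ℕ) : WeakHeadRed (idTower N) (abs (var 0)) := by
  induction N with
  | zero => exact .refl
  | succ N ih => exact (ih.appL _).tail (.beta _ _)

theorem transGen_weakHeadStep_pad (N : ℕ) (x : Lam) : TransGen WeakHeadStep (pad N x) x :=
  .tail' ((weakHeadRed_idTower N).appL x) (.beta _ _)

/-- Removal of the padding at the root. -/
def Unpad (N : ℕ) (θ x : Lam) : Prop := θ = pad N x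

theorem unpad_le_transGen (N : ℕ) : Unpad N ≤ TransGen WeakHeadStep := by
  rintro _ x rfl
  exact transGen_weakHeadStep_pad N x

theorem exists_unfolds_unpad (N : ℕ) (s : Lam) : ∃ θ, Unfolds (Unpad N) θ s := by
  induction s with
  | var i => exact ⟨_, .var rfl⟩
  | app _ _ hu hv =>
    obtain ⟨θ, hθ⟩ := hu
    obtain ⟨θ', hθ'⟩ := hv
    exact ⟨_, .app rfl hθ hθ'⟩
  | abs _ hu =>
    obtain ⟨θ, hθ⟩ := hu
    exact ⟨_, .abs rfl hθ⟩

theorem Unfolds.exists_eq_pad {N : ℕ} {θ s : Lam} (h : Unfolds (Unpad N) θ s) :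
    ∃ x, θ = pad N x := by
  cases h with
  | var h | app h | abs h => exact ⟨_, h⟩

/-- The number `k` of arguments of the term `(u)w₁…wₖ`, where `u` is not an application. -/
def spineLength : Lam → ℕ
  | app u _ => spineLength u + 1
  | _ => 0

theorem spineLength_lt_sizeOf (u : Lam) : spineLength u < sizeOf u := by
  induction u with
  | app _ _ ihu _ =>
    simp only [spineLength, Lam.app.sizeOf_spec]
    omega
  | var | abs => simp [spineLength]

theorem spineLength_rename (u : Lam) (ρ : ℕ → ℕ) : spineLength (u.rename ρ) = spineLength u := by
  induction u with
  | app _ _ ihu _ => simp only [rename, spineLength, ihu]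
  | var | abs => rfl

theorem le_spineLength_subst (u : Lam) (σ : ℕ → Lam) :
    spineLength u ≤ spineLength (u.subst σ) := by
  induction u with
  | app _ _ ihu _ => exact Nat.succ_le_succ ihu
  | var | abs => exact Nat.zero_le _

theorem spineLength_idTower (N : ℕ) : spineLength (idTower N) = N := by
  induction N with
  | zero => rfl
  | succ N ih => simp only [idTower, spineLength, ih]

theorem le_spineLength_pad_subst (N : ℕ) (x : Lam) (σ : ℕ → Lam) :
    N ≤ spineLength ((pad N x).subst σ) :=
  calc
    N ≤ spineLength (pad N x) := by simp only [pad, spineLength, spineLength_idTower, Nat.le_succ]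
    _ ≤ spineLength ((pad N x).subst σ) := le_spineLength_subst _ σ

theorem Realizes.le_spineLength {N : ℕ} {E : ℕ → Box} {σ : ℕ → Lam}
    (hσ : Realizes (Unpad N) E σ) {j : ℕ} (hj : j ≠ 0) : N ≤ spineLength (σ j) := by
  obtain ⟨θ, r, hθ, hx, -⟩ := hσ.box j hj
  obtain ⟨x, rfl⟩ := hθ.exists_eq_pad
  exact hx ▸ le_spineLength_pad_subst N x r

theorem headVar_of_spineLength_lt {k : ℕ} {σ : ℕ → Lam} (hσ : ∀ i < k, σ i = var i) {u : Lam}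
    (h : spineLength u < spineLength (u.subst σ)) : HeadVar (k ≤ ·) u := by
  induction u with
  | var i =>
    refine Nat.le_of_not_lt fun hi => ?_
    simp only [subst, hσ i hi, lt_irrefl] at h
  | app u v ihu _ => exact ihu (Nat.lt_of_succ_lt_succ h)
  | abs => exact absurd h (lt_irrefl 0)

/-! ### Erasable subterms -/

/-- `EqUpToFree k u v`: the term `v` arises from `u` by replacing some subterms `(x)w₁…wₘ`, where
`x` is free in the whole term and not among the first `k` variables. -/
inductive EqUpToFree : ℕ → Lam → Lam → Prop
  | headVar {k u} (v) : HeadVar (k ≤ ·) u → EqUpToFree k u v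
  | var (k i) : EqUpToFree k (var i) (var i)
  | app {k u u' v v'} : EqUpToFree k u u' → EqUpToFree k v v' → EqUpToFree k (app u v) (app u' v')
  | abs {k u u'} : EqUpToFree (k + 1) u u' → EqUpToFree k (abs u) (abs u')

theorem EqUpToFree.rename {k k' : ℕ} {u v : Lam} (h : EqUpToFree k u v) {ρ : ℕ → ℕ}
    (hρ : ∀ i, k ≤ i → k' ≤ ρ i) : EqUpToFree k' (u.rename ρ) (v.rename ρ) := by
  induction h generalizing k' ρ with
  | headVar v hu => exact .headVar _ (hu.rename hρ)
  | var => exact .var _ _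
  | app _ _ ihu ihv => exact .app (ihu hρ) (ihv hρ)
  | abs _ ih =>
    refine .abs (ih fun i hi => ?_)
    cases i with
    | zero => exact absurd hi (Nat.not_succ_le_zero _)
    | succ i => exact Nat.succ_le_succ (hρ i (Nat.le_of_succ_le_succ hi))

theorem EqUpToFree.subst {k k' : ℕ} {u v : Lam} (h : EqUpToFree k u v) {σ σ' : ℕ → Lam}
    (hσ : ∀ i, EqUpToFree k' (σ i) (σ' i)) (hfree : ∀ i, k ≤ i → HeadVar (k' ≤ ·) (σ i)) :
    EqUpToFree k' (u.subst σ) (v.subst σ') := by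
  induction h generalizing k' σ σ' with
  | headVar v hu => exact .headVar _ (hu.subst hfree)
  | var => exact hσ _
  | app _ _ ihu ihv => exact .app (ihu hσ hfree) (ihv hσ hfree)
  | abs _ ih =>
    refine .abs (ih (fun i => ?_) fun i hi => ?_) <;> cases i
    · exact .var _ _
    · exact (hσ _).rename fun _ => Nat.succ_le_succ
    · exact absurd hi (Nat.not_succ_le_zero _)
    · exact (hfree _ (Nat.le_of_succ_le_succ hi)).rename fun _ => Nat.succ_le_succ

theorem EqUpToFree.subst0 {k : ℕ} {u u' v v' : Lam} (hu : EqUpToFree (k + 1) u u')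
    (hv : EqUpToFree k v v') : EqUpToFree k (u.subst0 v) (u'.subst0 v') := by
  refine hu.subst (forall_scons hv fun i => .var k i) fun i hi => ?_
  cases i with
  | zero => exact absurd hi (Nat.not_succ_le_zero k)
  | succ i => exact Nat.le_of_succ_le_succ hi

theorem EqUpToFree.beta {k : ℕ} {u v u' : Lam} (h : EqUpToFree k u v) (hu : Beta u u') :
    ∃ v', BetaRed v v' ∧ EqUpToFree k u' v' := by
  induction h generalizing u' with
  | headVar v h => exact ⟨v, .refl, .headVar v (h.beta hu)⟩
  | var => cases hu
  | abs _ ih =>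
    cases hu with
    | abs hu =>
      obtain ⟨v', hred, h⟩ := ih hu
      exact ⟨_, hred.abs, .abs h⟩
  | app hf ha ihf iha =>
    cases hu with
    | beta =>
      cases hf with
      | headVar _ h => exact h.elim
      | abs hf => exact ⟨_, .single (.beta _ _), hf.subst0 ha⟩
    | appL _ hu =>
      obtain ⟨f', hred, h⟩ := ihf hu
      exact ⟨_, hred.app .refl, .app h ha⟩
    | appR _ hu =>
      obtain ⟨a', hred, h⟩ := iha hu
      exact ⟨_, BetaRed.app .refl hred, .app hf h⟩

theorem EqUpToFree.betaRed {k : ℕ} {u v u' : Lam} (h : EqUpToFree k u v) (hu : BetaRed u u') :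
    ∃ v', BetaRed v v' ∧ EqUpToFree k u' v' := by
  induction hu with
  | refl => exact ⟨v, .refl, h⟩
  | tail _ hstep ih =>
    obtain ⟨v₁, hred, h₁⟩ := ih
    obtain ⟨v₂, hred', h₂⟩ := h₁.beta hstep
    exact ⟨v₂, hred.trans hred', h₂⟩

theorem EqUpToFree.eq_of_closedUnder {k : ℕ} {u v : Lam} (h : EqUpToFree k u v)
    (hu : ClosedUnder k u) : u = v := by
  induction h with
  | headVar _ h => exact absurd hu h.not_closedUnder
  | var => rfl
  | app _ _ ihu ihv => rw [ihu hu.1, ihv hu.2]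
  | abs _ ih => rw [ih hu]

theorem EqUpToFree.betaEq_of_normal {k : ℕ} {u v t : Lam} (h : EqUpToFree k u v)
    (hut : BetaEq u t) (hclosed : ClosedUnder k t) (hnormal : Normal t) : BetaEq v t := by
  obtain ⟨v', hred, heq⟩ := h.betaRed (hut.betaRed_of_normal hnormal)
  rw [heq.eq_of_closedUnder hclosed]
  exact hred.betaEq

theorem eqUpToFree_of_subst_eq_var {k j : ℕ} {u : Lam} {a : ℕ → Lam}
    (ha : ∀ i < k, a i = var i) (h : u.subst a = var j) : EqUpToFree k u (var j) := by
  cases u with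
  | var i =>
    rcases lt_or_ge i k with hi | hi
    · cases (ha i hi).symm.trans h
      exact .var k _
    · exact .headVar _ hi
  | app | abs => cases h

theorem eqUpToFree_of_subst_eq_subst {N k : ℕ} {u v : Lam} {a b : ℕ → Lam}
    (hN : sizeOf u ≤ N) (ha : ∀ i < k, a i = var i) (hb : ∀ i < k, b i = var i)
    (hbN : ∀ i, k ≤ i → N ≤ spineLength (b i)) (h : u.subst a = v.subst b) :
    EqUpToFree k u v := by
  induction v generalizing u k a b with
  | var j =>
    rcases lt_or_ge j k with hj | hj
    · exact eqUpToFree_of_subst_eq_var ha (h.trans (hb j hj))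
    · refine .headVar _ (headVar_of_spineLength_lt ha ?_)
      calc
        spineLength u < sizeOf u := spineLength_lt_sizeOf u
        _ ≤ N := hN
        _ ≤ spineLength (u.subst a) := h ▸ hbN j hj
  | app v v' ihv ihv' =>
    cases u with
    | var i => exact .headVar _ (Nat.le_of_not_lt fun hi => nomatch (ha i hi).symm.trans h)
    | abs => cases h
    | app u u' =>
      rw [Lam.app.sizeOf_spec] at hN
      obtain ⟨h, h'⟩ := Lam.app.inj h
      exact .app (ihv (by omega) ha hb hbN h) (ihv' (by omega) ha hb hbN h')
  | abs v ih =>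
    cases u with
    | var i => exact .headVar _ (Nat.le_of_not_lt fun hi => nomatch (ha i hi).symm.trans h)
    | app => cases h
    | abs u =>
      rw [Lam.abs.sizeOf_spec] at hN
      refine .abs (ih (by omega) (liftSub_eq_var ha) (liftSub_eq_var hb) (fun i hi => ?_)
        (Lam.abs.inj h))
      cases i with
      | zero => exact absurd hi (Nat.not_succ_le_zero k)
      | succ i => exact (hbN i (Nat.le_of_succ_le_succ hi)).trans_eq (spineLength_rename _ _).symm

/-! ### Storage operators in terms of runs -/

/-- The state `(T)xf`, where `f` is the variable `0` and `x`, the variable `1`, stands for a box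
with body `t`. As `t` is to be closed, the arguments of the box are irrelevant. -/
def initialState (T t : Lam) : State :=
  ⟨2, fun _ => ⟨t, fun _ => var 0⟩, app (app T (var 1)) (var 0)⟩

/-- The run of `T` on the boxed argument `t` ends in `(f)τ`. -/
def Yields (T t τ : Lam) : Prop := ∃ n E, Run (initialState T t) ⟨n, E, app (var 0) τ⟩

theorem scoped_initialState {T : Lam} (hT : Closed T) (t : Lam) : (initialState T t).Scoped where
  env := ⟨Nat.two_pos, fun _ _ => Nat.two_pos⟩
  code := ⟨⟨ClosedUnder.mono hT (Nat.zero_le 2), Nat.one_lt_two⟩, Nat.two_pos⟩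

theorem initialState_code_subst {T : Lam} (hT : Closed T) (t θ : Lam) :
    (initialState T t).code.subst (scons (var 0) fun _ => θ) = app (app T θ) (var 0) := by
  simp only [initialState, subst, hT.subst_eq, scons]

theorem realizes_initialState {R : Lam → Lam → Prop} (T : Lam) {t θ : Lam} (ht : Closed t)
    (hθ : Unfolds R θ t) : Realizes R (initialState T t).env (scons (var 0) fun _ => θ) where
  zero := rfl
  box
    | 0, h => absurd rfl h
    | _ + 1, _ => ⟨θ, var, hθ, (subst_var θ).symm, ht.subst_congr _ _⟩

theorem Yields.betaEq {T T' t τ : Lam} (h : Yields T t τ) (hT : BetaEq T T') :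
    ∃ τ', BetaEq τ τ' ∧ Yields T' t τ' := by
  obtain ⟨n, E, hrun⟩ := h
  have hinit : StateEq (initialState T t) (initialState T' t) :=
    .mk 2 (fun _ => ⟨rfl, fun _ => .refl _⟩) ((hT.app (.refl _)).app (.refl _))
  obtain ⟨_, hrun', ⟨_, hE, hu⟩⟩ := hrun.stateEq hinit
  obtain ⟨_, hred, hneutral⟩ := hu.weakHeadRed_neutralEq (P := (· = 0)) rfl
  cases hneutral with
  | app hvar hτ =>
    cases hvar
    exact ⟨_, hτ, n, _, hrun'.trans (hred.run n _)⟩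

theorem IsStorageFor.exists_yields {T t : Lam} (h : IsStorageFor T t) (hclosed : Closed t)
    (hnormal : Normal t) : ∃ τ, BetaEq τ t ∧ Yields T t τ := by
  obtain ⟨hT, τ, hτ, hstore⟩ := h
  obtain ⟨θ, hθ⟩ := exists_unfolds_unpad (sizeOf τ) t
  have hunpad := unpad_le_transGen (sizeOf τ)
  have hθt : BetaRed θ t := hθ.betaRed fun _ _ h =>
    WeakHeadRed.betaRed (hunpad _ _ h).to_reflTransGen
  obtain ⟨σ, hσ, hred⟩ := hstore θ hθt.betaEq
  have hwhd : WeakHeadRed _ _ := hred.weakHeadRed id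
  rw [← initialState_code_subst hT t θ] at hwhd
  obtain ⟨n, E, τ', σ', hrun, hσ', heq⟩ := exists_run_of_weakHeadRed hunpad
    (scoped_initialState hT t) (realizes_initialState T hclosed hθ) hwhd
  have hcompare : EqUpToFree 1 τ τ' := eqUpToFree_of_subst_eq_subst le_rfl
    (fun i hi => Nat.lt_one_iff.1 hi ▸ hσ) (fun i hi => Nat.lt_one_iff.1 hi ▸ hσ'.zero)
    (fun i hi => hσ'.le_spineLength (Nat.one_le_iff_ne_zero.1 hi)) heq.symm
  exact ⟨τ', hcompare.betaEq_of_normal hτ (ClosedUnder.mono hclosed zero_le_one) hnormal,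
    n, E, hrun⟩

theorem Yields.isStorageFor {T t τ : Lam} (h : Yields T t τ) (hT : Closed T) (hclosed : Closed t)
    (hnormal : Normal t) (hτ : BetaEq τ t) : IsStorageFor T t := by
  obtain ⟨n, E, hrun⟩ := h
  refine ⟨hT, τ, hτ, fun θ hθ => ?_⟩
  obtain ⟨σ, hσ, hred⟩ := hrun.simulate (scoped_initialState hT t)
    (realizes_initialState T hclosed (hθ.betaRed_of_normal hnormal).stdRed)
  rw [initialState_code_subst hT, subst, subst, hσ.zero] at hred
  exact ⟨σ, hσ.zero, hred.headRed⟩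

end Lam

open Lam in
/-- Storage operators are invariant under β-equivalence. -/
theorem stmt8 (D : Set Lam) (hD : ∀ t ∈ D, Closed t ∧ Normal t)
    (T T' : Lam) (hT : Closed T) (hT' : Closed T')
    (hstor : ∀ t ∈ D, IsStorageFor T t) (heq : BetaEq T' T) :
    ∀ t ∈ D, IsStorageFor T' t := by
  intro t ht
  obtain ⟨hclosed, hnormal⟩ := hD t ht
  obtain ⟨τ, hτ, hyields⟩ := (hstor t ht).exists_yields hclosed hnormal
  obtain ⟨τ', hττ', hyields'⟩ := hyields.betaEq heq.symm
  exact hyields'.isStorageFor hT' hclosed hnormal (hττ'.symm.trans hτ)
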